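/- (Theorem 4.1(iv), second case.) Uniformly over all λ ∈ C⁺ and all X ∈ a with x3 ≥ x1 ≥ x2 such that β_λ ≥ α_λ and α_λ α_{X⁺} ≥ β_λ β_{X⁺}, one has E_k(X,λ) ≍ e^{⟨λ,X⁺⟩} / [ (1+α_λ α_{X⁺})^{k} (1+β_λ β_{X⁺})^{k+1} (1+γ_λ γ_{X⁺})^{k+1} ]. -/

import Mathlib

open Real MeasureTheory

/-- The rank-one Dunkl kernel `E_k^{rk1}(x,v)`. -/
noncomputable def Erk1 (k x v : ℝ) : ℝ :=
  (Real.Gamma (k + 1/2) / (Real.sqrt Real.pi * Real.Gamma k)) *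
    ∫ z in (-1 : ℝ)..1, Real.exp (z * x * v) * (1 - z) ^ (k - 1) * (1 + z) ^ k

/-- The normalized modified Bessel function `𝒥_a(y)`, for `a > -1/2`. -/
noncomputable def besselJ (a y : ℝ) : ℝ :=
  (Real.Gamma (a + 1) / (Real.sqrt Real.pi * Real.Gamma (a + 1/2))) *
    ∫ z in (-1 : ℝ)..1, Real.exp (y * z) * (1 - z ^ 2) ^ (a - 1/2)

/-- `W_k(λ,ν)`. -/
noncomputable def Wk (k l1 l2 l3 n1 n2 : ℝ) : ℝ :=
  ((l1 - n1) * (l1 - n2) * (n1 - l2) * (l2 - n2) * (n1 - l3) * (n2 - l3)) ^ (k - 1)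

/-- `V(λ) = (λ1-λ2)(λ1-λ3)(λ2-λ3)`. -/
def Vlam (l1 l2 l3 : ℝ) : ℝ := (l1 - l2) * (l1 - l3) * (l2 - l3)

/-- The `A₂` Dunkl kernel `E_k(X,λ)`, defined via the rank-one kernel formula. -/
noncomputable def EkA2 (k x1 x2 x3 l1 l2 l3 : ℝ) : ℝ :=
  (3 * Real.Gamma (3 * k) / (Vlam l1 l2 l3 ^ (2 * k) * Real.Gamma k ^ 2)) *
    ∫ n2 in l3..l2, ∫ n1 in l2..l1,
      ((n1 - l2) * (l1 - n2) * Erk1 k ((x1 - x2) / 2) (n1 - n2)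
        + (l1 - n1) * (l2 - n2) * Erk1 k (-(x1 - x2) / 2) (n1 - n2))
      * ((n1 - l3) * (n2 - l3)) * Real.exp ((x1 + x2 - 2 * x3) * (n1 + n2) / 2)
      * Wk k l1 l2 l3 n1 n2



lemma exp_dom (r : ℝ) (hr : 0 < r) : ∃ C : ℝ, 0 < C ∧ ∀ y : ℝ, 0 ≤ y → (1 + y) ^ r ≤ C * Real.exp (y / 2) := by
  refine ⟨(1 + 2 * r) ^ r, by positivity, fun y hy => ?_⟩
  have h1 : 1 + y ≤ (1 + 2 * r) * Real.exp (y / (2 * r)) := by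
    have h2 := Real.add_one_le_exp (y / (2 * r))
    have h3 : 1 + y ≤ (1 + 2 * r) * (y / (2 * r) + 1) := by
      have : (1 + 2 * r) * (y / (2 * r) + 1) = 1 + y + 2 * r + y / (2 * r) := by
        field_simp; ring
      rw [this]
      have : 0 ≤ y / (2 * r) := by positivity
      linarith
    exact h3.trans (by gcongr)
  calc (1 + y) ^ r ≤ ((1 + 2 * r) * Real.exp (y / (2 * r))) ^ r :=
        Real.rpow_le_rpow (by linarith) h1 hr.le
    _ = (1 + 2 * r) ^ r * Real.exp (y / 2) := by
        rw [Real.mul_rpow (by positivity) (by positivity), ← Real.exp_mul]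
        congr 2
        field_simp

lemma pow_half_bd (r w : ℝ) (h1 : 1 / 2 ≤ w) (h2 : w ≤ 1) :
    (2 : ℝ) ^ (-|r|) ≤ w ^ r ∧ w ^ r ≤ (2 : ℝ) ^ |r| := by
  have hw : 0 < w := by linarith
  have h3 : (1 / 2 : ℝ) ^ |r| = 2 ^ (-|r|) := by
    rw [one_div, Real.inv_rpow (by norm_num), Real.rpow_neg (by norm_num)]
  rcases le_total 0 r with hr | hr
  · rw [abs_of_nonneg hr] at *
    refine ⟨h3 ▸ Real.rpow_le_rpow (by norm_num) h1 hr, ?_⟩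
    exact (Real.rpow_le_one hw.le h2 hr).trans (Real.one_le_rpow (by norm_num) hr)
  · rw [abs_of_nonpos hr] at *
    constructor
    · rw [neg_neg]
      calc (2:ℝ)^r ≤ 1 := Real.rpow_le_one_of_one_le_of_nonpos (by norm_num) hr
        _ ≤ w ^ r := Real.one_le_rpow_of_pos_of_le_one_of_nonpos hw h2 hr
    · calc w ^ r ≤ (1/2) ^ r := Real.rpow_le_rpow_of_nonpos (by norm_num) h1 hr
        _ = 2 ^ (-r) := by rw [one_div, Real.inv_rpow (by norm_num), Real.rpow_neg (by norm_num)]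

lemma key01 (m n : ℝ) (hm : 0 < m) (hn : 0 < n) : ∃ C : ℝ, 0 < C ∧ ∀ y : ℝ, 0 ≤ y →
    C⁻¹ * (1 + y) ^ (-m) ≤ ∫ u in (0:ℝ)..1, u ^ (m - 1) * (1 - u) ^ (n - 1) * Real.exp (-(y * u)) ∧
    ∫ u in (0:ℝ)..1, u ^ (m - 1) * (1 - u) ^ (n - 1) * Real.exp (-(y * u)) ≤ C * (1 + y) ^ (-m) := by
  obtain ⟨A, hA, hexp⟩ := exp_dom m hm
  set K : ℝ := max (2 ^ |n - 1|) (2 ^ |m - 1|) with hK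
  have hKpos : 0 < K := lt_max_of_lt_left (by positivity)
  have i1 : IntervalIntegrable (fun u : ℝ => u ^ (m - 1)) volume 0 1 :=
    intervalIntegral.intervalIntegrable_rpow' (by linarith)
  have i2 : IntervalIntegrable (fun u : ℝ => (1 - u) ^ (n - 1)) volume 0 1 := by
    have := (intervalIntegral.intervalIntegrable_rpow' (a := 0) (b := 1) (r := n - 1) (by linarith)).comp_sub_left 1
    simpa using this.symm
  have bd : ∀ y : ℝ, 0 ≤ y → ∀ u ∈ Set.Ioo (0:ℝ) 1,
      u ^ (m - 1) * (1 - u) ^ (n - 1) * Real.exp (-(y * u)) ≤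
        K * (u ^ (m - 1) * Real.exp (-(y * u)) + (1 - u) ^ (n - 1) * Real.exp (-(y / 2))) := by
    intro y hy u hu
    have p1 : 0 < u ^ (m - 1) := Real.rpow_pos_of_pos hu.1 _
    have p2 : 0 < (1 - u) ^ (n - 1) := Real.rpow_pos_of_pos (by linarith [hu.2]) _
    rcases le_total u (1/2) with h | h
    · have := (pow_half_bd (n - 1) (1 - u) (by linarith) (by linarith [hu.1])).2
      have : (1 - u) ^ (n - 1) ≤ K := this.trans (le_max_left _ _)
      calc _ = (1 - u) ^ (n - 1) * (u ^ (m - 1) * Real.exp (-(y * u))) := by ring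
        _ ≤ K * (u ^ (m - 1) * Real.exp (-(y * u))) := by gcongr
        _ ≤ _ := by gcongr; exact le_add_of_nonneg_right (by positivity)
    · have := (pow_half_bd (m - 1) u (by linarith) (by linarith [hu.2])).2
      have : u ^ (m - 1) ≤ K := this.trans (le_max_right _ _)
      calc u ^ (m - 1) * (1 - u) ^ (n - 1) * Real.exp (-(y * u)) ≤ K * (1 - u) ^ (n - 1) * Real.exp (-(y / 2)) := by
            gcongr
            nlinarith
        _ = K * ((1 - u) ^ (n - 1) * Real.exp (-(y / 2))) := by ring
        _ ≤ _ := by gcongr; exact le_add_of_nonneg_left (by positivity)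
  have j1 : ∀ y : ℝ, IntervalIntegrable (fun u : ℝ => u ^ (m - 1) * Real.exp (-(y * u))) volume 0 1 := fun y =>
    i1.mul_continuousOn (by fun_prop)
  have j2 : ∀ y : ℝ, IntervalIntegrable (fun u : ℝ =>
        K * (u ^ (m - 1) * Real.exp (-(y * u)) + (1 - u) ^ (n - 1) * Real.exp (-(y / 2)))) volume 0 1 := fun y =>
    ((j1 y).add (i2.mul_const _)).const_mul _
  have ii : ∀ y : ℝ, 0 ≤ y → IntervalIntegrable (fun u : ℝ => u ^ (m - 1) * (1 - u) ^ (n - 1) * Real.exp (-(y * u))) volume 0 1 := by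
    intro y hy
    have := j2 y
    rw [intervalIntegrable_iff_integrableOn_Ioo_of_le (by norm_num)] at this ⊢
    refine Integrable.mono' this (by
      apply Measurable.aestronglyMeasurable; fun_prop) ?_
    refine (ae_restrict_iff' measurableSet_Ioo).2 (Filter.Eventually.of_forall fun u hu => ?_)
    have p1 : 0 < u ^ (m - 1) := Real.rpow_pos_of_pos hu.1 _
    have p2 : 0 < (1 - u) ^ (n - 1) := Real.rpow_pos_of_pos (by linarith [hu.2]) _
    rw [Real.norm_of_nonneg (by positivity)]
    exact bd y hy u hu
  -- upper
  have up : ∀ y : ℝ, 0 ≤ y → ∫ u in (0:ℝ)..1, u ^ (m - 1) * (1 - u) ^ (n - 1) * Real.exp (-(y * u)) ≤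
      (K * (Real.exp 1 * Real.Gamma m + A / n)) * (1 + y) ^ (-m) := by
    intro y hy
    have s1 : ∫ u in (0:ℝ)..1, u ^ (m - 1) * (1 - u) ^ (n - 1) * Real.exp (-(y * u)) ≤
      ∫ u in (0:ℝ)..1, K * (u ^ (m - 1) * Real.exp (-(y * u)) + (1 - u) ^ (n - 1) * Real.exp (-(y / 2))) :=
      intervalIntegral.integral_mono_on_of_le_Ioo (by norm_num) (ii y hy) (j2 y) (bd y hy)
    rw [intervalIntegral.integral_const_mul, intervalIntegral.integral_add (j1 y) (i2.mul_const _),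
      intervalIntegral.integral_mul_const] at s1
    have s2 : ∫ u in (0:ℝ)..1, (1 - u) ^ (n - 1) = 1 / n := by
      rw [intervalIntegral.integral_comp_sub_left (fun u : ℝ => u ^ (n - 1)), sub_self, sub_zero,
        integral_rpow (Or.inl (by linarith))]
      simp [hn.ne']
    have s3 : ∫ u in (0:ℝ)..1, u ^ (m - 1) * Real.exp (-(y * u)) ≤ Real.exp 1 * Real.Gamma m * (1 + y) ^ (-m) := by
      have g := Real.integral_rpow_mul_exp_neg_mul_Ioi hm (show 0 < 1 + y by linarith)
      have gi : IntegrableOn (fun t : ℝ => t ^ (m - 1) * Real.exp (-((1 + y) * t))) (Set.Ioi 0) := by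
        by_contra hcon
        rw [integral_undef hcon] at g
        have : 0 < (1 / (1 + y)) ^ m * Real.Gamma m := by
          have := Real.Gamma_pos_of_pos hm; positivity
        linarith
      rw [intervalIntegral.integral_of_le (by norm_num)]
      calc ∫ u in Set.Ioc (0:ℝ) 1, u ^ (m - 1) * Real.exp (-(y * u)) ≤
          ∫ u in Set.Ioc (0:ℝ) 1, Real.exp 1 * (u ^ (m - 1) * Real.exp (-((1 + y) * u))) := by
            refine setIntegral_mono_on ?_ ?_ measurableSet_Ioc ?_
            · exact (intervalIntegrable_iff_integrableOn_Ioc_of_le (by norm_num)).1 (j1 y)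
            · exact (gi.mono_set Set.Ioc_subset_Ioi_self).const_mul _
            · intro u hu
              have p1 : 0 < u ^ (m - 1) := Real.rpow_pos_of_pos hu.1 _
              calc u ^ (m - 1) * Real.exp (-(y * u)) ≤ u ^ (m - 1) * Real.exp (1 + -((1 + y) * u)) := by
                    gcongr; nlinarith [hu.2]
                _ = _ := by rw [Real.exp_add]; ring
        _ ≤ ∫ u in Set.Ioi (0:ℝ), Real.exp 1 * (u ^ (m - 1) * Real.exp (-((1 + y) * u))) := by
            refine setIntegral_mono_set (gi.const_mul _) ?_ (Filter.Eventually.of_forall Set.Ioc_subset_Ioi_self)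
            refine (ae_restrict_iff' measurableSet_Ioi).2 (Filter.Eventually.of_forall fun u hu => ?_)
            have p1 : 0 < u ^ (m - 1) := Real.rpow_pos_of_pos hu _
            simp only [Pi.zero_apply]
            positivity
        _ = _ := by
            rw [integral_const_mul, g, one_div, Real.inv_rpow (by linarith), Real.rpow_neg (by linarith)]; ring
    have s4 : Real.exp (-(y / 2)) ≤ A * (1 + y) ^ (-m) := by
      have := hexp y hy
      rw [Real.exp_neg, Real.rpow_neg (by linarith), ← div_eq_mul_inv, le_div_iff₀ (by positivity), inv_mul_le_iff₀ (by positivity)]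
      linarith
    rw [s2] at s1
    calc _ ≤ _ := s1
      _ ≤ K * (Real.exp 1 * Real.Gamma m * (1 + y) ^ (-m) + 1 / n * (A * (1 + y) ^ (-m))) := by gcongr
      _ = _ := by ring
  -- lower
  have lo : ∀ y : ℝ, 0 ≤ y → (2 ^ (-|n - 1|) * Real.exp (-1) * ((1/2) ^ m / m)) * (1 + y) ^ (-m) ≤
      ∫ u in (0:ℝ)..1, u ^ (m - 1) * (1 - u) ^ (n - 1) * Real.exp (-(y * u)) := by
    intro y hy
    set δ : ℝ := 1 / 2 * (1 + y)⁻¹ with hδ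
    have d0 : 0 < δ := by positivity
    have hy1 : (1 + y)⁻¹ ≤ 1 := inv_le_one_of_one_le₀ (by linarith)
    have d1 : δ ≤ 1 / 2 := by linarith
    have d2 : y * δ ≤ 1 := by
      have : (1 + y) * (1 + y)⁻¹ = 1 := mul_inv_cancel₀ (by linarith)
      nlinarith
    have idelta : IntervalIntegrable (fun u : ℝ => u ^ (m - 1)) volume 0 δ :=
      intervalIntegral.intervalIntegrable_rpow' (by linarith)
    have iid := (ii y hy).mono_set (c := 0) (d := δ) (by
      rw [Set.uIcc_of_le (by linarith), Set.uIcc_of_le (by linarith)]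
      exact Set.Icc_subset_Icc le_rfl (by linarith))
    calc _ = ∫ u in (0:ℝ)..δ, (2 ^ (-|n - 1|) * Real.exp (-1)) * u ^ (m - 1) := by
          rw [intervalIntegral.integral_const_mul, integral_rpow (Or.inl (by linarith)), sub_add_cancel,
            Real.zero_rpow hm.ne', sub_zero, hδ, Real.mul_rpow (by norm_num) (by positivity), Real.inv_rpow (by linarith),
            Real.rpow_neg (x := 1 + y) (by linarith)]; ring
      _ ≤ ∫ u in (0:ℝ)..δ, u ^ (m - 1) * (1 - u) ^ (n - 1) * Real.exp (-(y * u)) := by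
          refine intervalIntegral.integral_mono_on_of_le_Ioo d0.le (idelta.const_mul _) iid ?_
          intro u hu
          have p1 : 0 < u ^ (m - 1) := Real.rpow_pos_of_pos hu.1 _
          have := (pow_half_bd (n - 1) (1 - u) (by linarith [hu.2]) (by linarith [hu.1])).1
          have e : Real.exp (-1) ≤ Real.exp (-(y * u)) := by
            gcongr; nlinarith [hu.2]
          calc _ = u ^ (m - 1) * 2 ^ (-|n - 1|) * Real.exp (-1) := by ring
            _ ≤ _ := by
              have p2 : 0 < (1 - u) ^ (n - 1) := Real.rpow_pos_of_pos (by linarith [hu.2]) _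
              gcongr
      _ ≤ _ := by
          refine intervalIntegral.integral_mono_interval le_rfl d0.le (by linarith) ?_ (ii y hy)
          rw [← Measure.restrict_congr_set Ioo_ae_eq_Ioc]
          refine (ae_restrict_iff' measurableSet_Ioo).2 (Filter.Eventually.of_forall fun u hu => ?_)
          have p1 : 0 < u ^ (m - 1) := Real.rpow_pos_of_pos hu.1 _
          have p2 : 0 < (1 - u) ^ (n - 1) := Real.rpow_pos_of_pos (by linarith [hu.2]) _
          simp only [Pi.zero_apply]
          positivity
  set c1 := (K * (Real.exp 1 * Real.Gamma m + A / n))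
  set c2 := (2 ^ (-|n - 1|) * Real.exp (-1) * ((1/2) ^ m / m))
  have hc2 : 0 < c2 := by positivity
  refine ⟨max c1 c2⁻¹, lt_max_of_lt_right (by positivity), fun y hy => ⟨le_trans ?_ (lo y hy), (up y hy).trans ?_⟩⟩
  · gcongr
    exact inv_le_of_inv_le₀ hc2 (le_max_right _ _)
  · gcongr
    exact le_max_left _ _

lemma keyL (m n : ℝ) (hm : 0 < m) (hn : 0 < n) : ∃ C : ℝ, 0 < C ∧ ∀ c d y : ℝ, c < d → 0 ≤ y →
    IntervalIntegrable (fun s : ℝ => (s - c) ^ (m - 1) * (d - s) ^ (n - 1) * Real.exp (-(y * (s - c)))) volume c d ∧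
    C⁻¹ * ((d - c) ^ (m + n - 1) * (1 + y * (d - c)) ^ (-m)) ≤
      ∫ s in c..d, (s - c) ^ (m - 1) * (d - s) ^ (n - 1) * Real.exp (-(y * (s - c))) ∧
    ∫ s in c..d, (s - c) ^ (m - 1) * (d - s) ^ (n - 1) * Real.exp (-(y * (s - c))) ≤
      C * ((d - c) ^ (m + n - 1) * (1 + y * (d - c)) ^ (-m)) := by
  obtain ⟨C, hC, h⟩ := key01 m n hm hn
  refine ⟨C, hC, fun c d y hcd hy => ?_⟩
  have hL : 0 < d - c := sub_pos.2 hcd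
  obtain ⟨h1, h2⟩ := h (y * (d - c)) (by positivity)
  have e := intervalIntegral.integral_comp_mul_add (a := 0) (b := 1)
    (fun s : ℝ => (s - c) ^ (m - 1) * (d - s) ^ (n - 1) * Real.exp (-(y * (s - c)))) hL.ne' c
  have e2 : ∫ u in (0:ℝ)..1, ((d - c) * u + c - c) ^ (m - 1) * (d - ((d - c) * u + c)) ^ (n - 1) *
      Real.exp (-(y * ((d - c) * u + c - c))) = (d - c) ^ (m + n - 2) *
      ∫ u in (0:ℝ)..1, u ^ (m - 1) * (1 - u) ^ (n - 1) * Real.exp (-(y * (d - c) * u)) := by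
    rw [← intervalIntegral.integral_const_mul]
    refine intervalIntegral.integral_congr fun u hu => ?_
    rw [Set.uIcc_of_le (by norm_num)] at hu
    have a1 : (d - c) * u + c - c = (d - c) * u := by ring
    have a2 : d - ((d - c) * u + c) = (d - c) * (1 - u) := by ring
    simp only [a1, a2]
    rw [Real.mul_rpow hL.le hu.1, Real.mul_rpow hL.le (by linarith [hu.2]),
      show m + n - 2 = (m - 1) + (n - 1) by ring, Real.rpow_add hL]
    ring_nf
  rw [e2] at e
  simp only [mul_zero, zero_add, mul_one, sub_add_cancel, smul_eq_mul] at e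
  have e3 : ∫ s in c..d, (s - c) ^ (m - 1) * (d - s) ^ (n - 1) * Real.exp (-(y * (s - c))) =
     (d - c) ^ (m + n - 1) *
      ∫ u in (0:ℝ)..1, u ^ (m - 1) * (1 - u) ^ (n - 1) * Real.exp (-(y * (d - c) * u)) := by
    rw [show m + n - 1 = (m + n - 2) + 1 by ring, Real.rpow_add hL, Real.rpow_one]
    rw [eq_inv_mul_iff_mul_eq₀ hL.ne'] at e
    rw [← e]; ring
  have pL : 0 < (d - c) ^ (m + n - 1) := by positivity
  rw [e3]
  refine ⟨?_, ?_, ?_⟩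
  · apply intervalIntegral.intervalIntegrable_of_integral_ne_zero
    rw [e3]
    refine (mul_pos pL (lt_of_lt_of_le ?_ h1)).ne'
    positivity
  · calc _ = (d - c) ^ (m + n - 1) * (C⁻¹ * (1 + y * (d - c)) ^ (-m)) := by ring
      _ ≤ _ := by gcongr
  · calc _ ≤ (d - c) ^ (m + n - 1) * (C * (1 + y * (d - c)) ^ (-m)) := by gcongr
      _ = _ := by ring

lemma erk_meas (k x : ℝ) : Measurable (fun v => Erk1 k x v) := by
  unfold Erk1
  refine Measurable.const_mul ?_ _
  simp_rw [intervalIntegral.integral_of_le (show (-1:ℝ) ≤ 1 by norm_num)]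
  have : StronglyMeasurable (fun p : ℝ × ℝ =>
      Real.exp (p.2 * x * p.1) * (1 - p.2) ^ (k - 1) * (1 + p.2) ^ k) := by
    apply Measurable.stronglyMeasurable; fun_prop
  exact (this.integral_prod_right' (ν := volume.restrict (Set.Ioc (-1) 1))).measurable

lemma erk_bd (k : ℝ) (hk : 0 < k) : ∃ C : ℝ, 0 < C ∧ ∀ x v y : ℝ, 0 ≤ y →
    (x * v = y → 0 ≤ Erk1 k x v ∧ Erk1 k x v ≤ C * (Real.exp y * (1 + y) ^ (-k))) ∧
    (x * v = -y → C⁻¹ * (Real.exp y * (1 + y) ^ (-(k + 1))) ≤ Erk1 k x v ∧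
      Erk1 k x v ≤ C * (Real.exp y * (1 + y) ^ (-(k + 1)))) := by
  obtain ⟨C1, hC1, H1⟩ := keyL k (k + 1) hk (by linarith)
  obtain ⟨C2, hC2, H2⟩ := keyL (k + 1) k (by linarith) hk
  set K := Real.Gamma (k + 1/2) / (Real.sqrt Real.pi * Real.Gamma k) with hK
  have hKp : 0 < K := by
    have := Real.Gamma_pos_of_pos hk
    have := Real.Gamma_pos_of_pos (show 0 < k + 1/2 by linarith)
    positivity
  have cmp : ∀ y : ℝ, 0 ≤ y → ∀ r : ℝ, 0 < r → (1 + y * 2) ^ (-r) ≤ (1 + y) ^ (-r) ∧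
      2 ^ (-r) * (1 + y) ^ (-r) ≤ (1 + y * 2) ^ (-r) := by
    intro y hy r hr
    constructor
    · exact Real.rpow_le_rpow_of_nonpos (by linarith) (by linarith) (by linarith)
    · rw [← Real.mul_rpow (by norm_num) (by linarith)]
      exact Real.rpow_le_rpow_of_nonpos (by linarith) (by linarith) (by linarith)
  set D1 := K * C1 * 2 ^ (k + (k + 1) - 1)
  set D2 := K * C2 * 2 ^ (k + 1 + k - 1)
  set D3 := K * C2⁻¹ * 2 ^ (k + 1 + k - 1) * 2 ^ (-(k + 1))
  have hD3 : 0 < D3 := by positivity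
  refine ⟨max (max D1 D2) D3⁻¹, lt_max_of_lt_right (by positivity), fun x v y hy => ⟨fun h => ?_, fun h => ?_⟩⟩
  · have e : Erk1 k x v = K * (Real.exp y * ∫ s in (-1:ℝ)..1, (s - (-1)) ^ (k - 1) * (1 - s) ^ (k + 1 - 1) * Real.exp (-(y * (s - (-1))))) := by
      unfold Erk1
      rw [← hK]
      congr 1
      rw [← intervalIntegral.integral_const_mul]
      have := intervalIntegral.integral_comp_neg (a := -1) (b := 1)
        (fun z : ℝ => Real.exp (z * x * v) * (1 - z) ^ (k - 1) * (1 + z) ^ k)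
      rw [neg_neg] at this
      rw [← this]
      refine intervalIntegral.integral_congr fun u hu => ?_
      rw [show -u * x * v = y + -(y * (u - (-1))) by rw [← h]; ring, Real.exp_add,
        show 1 - -u = u - (-1) by ring, show k + 1 - 1 = k by ring, show 1 + -u = 1 - u by ring]
      ring
    obtain ⟨_, a1, a2⟩ := H1 (-1) 1 y (by norm_num) hy
    rw [show (1:ℝ) - (-1) = 2 by norm_num] at a1 a2
    obtain ⟨c1, c2⟩ := cmp y hy k hk
    rw [e]
    constructor
    · refine mul_nonneg hKp.le (mul_nonneg (Real.exp_pos _).le (le_trans ?_ a1))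
      positivity
    · calc _ ≤ K * (Real.exp y * (C1 * (2 ^ (k + (k + 1) - 1) * (1 + y * 2) ^ (-k)))) := by gcongr
        _ ≤ K * (Real.exp y * (C1 * (2 ^ (k + (k + 1) - 1) * (1 + y) ^ (-k)))) := by gcongr
        _ = D1 * (Real.exp y * (1 + y) ^ (-k)) := by ring
        _ ≤ _ := by
          gcongr
          exact (le_max_left _ _).trans (le_max_left _ _)
  · have e : Erk1 k x v = K * (Real.exp y * ∫ s in (-1:ℝ)..1, (s - (-1)) ^ (k + 1 - 1) * (1 - s) ^ (k - 1) * Real.exp (-(y * (s - (-1))))) := by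
      unfold Erk1
      rw [← hK]
      congr 1
      rw [← intervalIntegral.integral_const_mul]
      refine intervalIntegral.integral_congr fun u hu => ?_
      rw [show u * x * v = y + -(y * (u - (-1))) by rw [mul_assoc, h]; ring, Real.exp_add,
        show 1 + u = u - (-1) by ring, show k + 1 - 1 = k by ring]
      ring
    obtain ⟨_, a1, a2⟩ := H2 (-1) 1 y (by norm_num) hy
    rw [show (1:ℝ) - (-1) = 2 by norm_num] at a1 a2
    obtain ⟨c1, c2⟩ := cmp y hy (k + 1) (by linarith)
    rw [e]
    constructor
    · calc _ ≤ D3 * (Real.exp y * (1 + y) ^ (-(k + 1))) := by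
            gcongr
            exact inv_le_of_inv_le₀ hD3 (le_max_right _ _)
        _ = K * (Real.exp y * (C2⁻¹ * (2 ^ (k + 1 + k - 1) * (2 ^ (-(k + 1)) * (1 + y) ^ (-(k + 1)))))) := by ring
        _ ≤ K * (Real.exp y * (C2⁻¹ * (2 ^ (k + 1 + k - 1) * (1 + y * 2) ^ (-(k + 1))))) := by gcongr
        _ ≤ _ := by gcongr
    · calc _ ≤ K * (Real.exp y * (C2 * (2 ^ (k + 1 + k - 1) * (1 + y * 2) ^ (-(k + 1))))) := by gcongr
        _ ≤ K * (Real.exp y * (C2 * (2 ^ (k + 1 + k - 1) * (1 + y) ^ (-(k + 1))))) := by gcongr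
        _ = D2 * (Real.exp y * (1 + y) ^ (-(k + 1))) := by ring
        _ ≤ _ := by
          gcongr
          exact (le_max_right _ _).trans (le_max_left _ _)

lemma sandwich (f : ℝ → ℝ → ℝ) (hf : Measurable (Function.uncurry f)) (c d c' d' : ℝ) (hcd : c ≤ d) (hcd' : c' ≤ d')
    (g1 h1 g2 h2 : ℝ → ℝ)
    (ig1 : IntervalIntegrable g1 volume c' d') (ig2 : IntervalIntegrable g2 volume c' d')
    (ih1 : IntervalIntegrable h1 volume c d) (ih2 : IntervalIntegrable h2 volume c d)
    (H : ∀ t ∈ Set.Ioo c d, ∀ s ∈ Set.Ioo c' d', 0 ≤ g1 s * h1 t ∧ g1 s * h1 t ≤ f t s ∧ f t s ≤ g2 s * h2 t) :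
    (∫ s in c'..d', g1 s) * (∫ t in c..d, h1 t) ≤ ∫ t in c..d, ∫ s in c'..d', f t s ∧
    ∫ t in c..d, ∫ s in c'..d', f t s ≤ (∫ s in c'..d', g2 s) * (∫ t in c..d, h2 t) := by
  have ifs : ∀ t ∈ Set.Ioo c d, IntervalIntegrable (fun s => f t s) volume c' d' := by
    intro t ht
    have := ig2.mul_const (h2 t)
    rw [intervalIntegrable_iff_integrableOn_Ioo_of_le hcd'] at this ⊢
    refine Integrable.mono' this (hf.comp measurable_prodMk_left).aestronglyMeasurable ?_
    refine (ae_restrict_iff' measurableSet_Ioo).2 (Filter.Eventually.of_forall fun s hs => ?_)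
    obtain ⟨a1, a2, a3⟩ := H t ht s hs
    rw [Real.norm_of_nonneg (a1.trans a2)]
    exact a3
  have in1 : ∀ t ∈ Set.Ioo c d, (∫ s in c'..d', g1 s) * h1 t ≤ ∫ s in c'..d', f t s := by
    intro t ht
    rw [← intervalIntegral.integral_mul_const]
    exact intervalIntegral.integral_mono_on_of_le_Ioo hcd' (ig1.mul_const _) (ifs t ht) fun s hs => (H t ht s hs).2.1
  have in2 : ∀ t ∈ Set.Ioo c d, ∫ s in c'..d', f t s ≤ (∫ s in c'..d', g2 s) * h2 t := by
    intro t ht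
    rw [← intervalIntegral.integral_mul_const]
    exact intervalIntegral.integral_mono_on_of_le_Ioo hcd' (ifs t ht) (ig2.mul_const _) fun s hs => (H t ht s hs).2.2
  have in0 : ∀ t ∈ Set.Ioo c d, 0 ≤ ∫ s in c'..d', f t s := by
    intro t ht
    have := intervalIntegral.integral_mono_on_of_le_Ioo hcd' (μ := volume) (f := fun _ => (0:ℝ)) (by simp) (ifs t ht)
      fun s hs => (H t ht s hs).1.trans (H t ht s hs).2.1
    simpa using this
  have io : IntervalIntegrable (fun t => ∫ s in c'..d', f t s) volume c d := by
    have := ih2.const_mul (∫ s in c'..d', g2 s)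
    rw [intervalIntegrable_iff_integrableOn_Ioo_of_le hcd] at this ⊢
    refine Integrable.mono' this ?_ ?_
    · simp_rw [intervalIntegral.integral_of_le hcd']
      exact (hf.stronglyMeasurable.integral_prod_right' (ν := volume.restrict (Set.Ioc c' d'))).aestronglyMeasurable
    · refine (ae_restrict_iff' measurableSet_Ioo).2 (Filter.Eventually.of_forall fun t ht => ?_)
      rw [Real.norm_of_nonneg (in0 t ht)]
      exact in2 t ht
  constructor
  · rw [← intervalIntegral.integral_const_mul]
    exact intervalIntegral.integral_mono_on_of_le_Ioo hcd (ih1.const_mul _) io in1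
  · rw [← intervalIntegral.integral_const_mul]
    exact intervalIntegral.integral_mono_on_of_le_Ioo hcd io (ih2.const_mul _) in2

lemma decay (r : ℝ) (hr : 0 < r) : ∃ C : ℝ, 0 < C ∧ ∀ q a b s t : ℝ, 0 ≤ a → 0 ≤ b → 0 < s → 0 < t → t < q →
    Real.exp (-((a + b) * t)) * (1 + b / 2 * (s + q - t)) ^ (-r) ≤
      C * ((1 + b * q) ^ (-r) * Real.exp (-((a + b) / 2 * t))) := by
  obtain ⟨A, hA, h⟩ := exp_dom r hr
  refine ⟨2 ^ r * A, by positivity, fun q a b s t ha hb hs ht htq => ?_⟩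
  have hq : 0 < q - t := by linarith
  have hbt : 0 ≤ b * t := by positivity
  have hbw : 0 ≤ b * (q - t) := by positivity
  have hbs : 0 ≤ b * s := by positivity
  have hbq : 0 ≤ b * q := by nlinarith
  have p1 : 0 < 1 + b / 2 * (s + q - t) := by nlinarith
  have e1 : 1 + b * q ≤ 2 * (1 + b * t) * (1 + b / 2 * (s + q - t)) := by
    nlinarith [mul_nonneg hbt hbw, mul_nonneg hbt hbs]
  have e2 : (1 + b * q) ^ r ≤ 2 ^ r * (1 + b * t) ^ r * (1 + b / 2 * (s + q - t)) ^ r := by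
    rw [← Real.mul_rpow (by norm_num) (by linarith), ← Real.mul_rpow (by linarith) p1.le]
    exact Real.rpow_le_rpow (by linarith) e1 hr.le
  have e3 := h (b * t) hbt
  have e4 : (1 + b / 2 * (s + q - t)) ^ (-r) ≤ 2 ^ r * (1 + b * t) ^ r * (1 + b * q) ^ (-r) := by
    rw [Real.rpow_neg p1.le, Real.rpow_neg (by linarith), ← div_eq_mul_inv, inv_eq_one_div,
      div_le_div_iff₀ (by positivity) (by positivity)]
    linarith
  calc _ ≤ Real.exp (-((a + b) * t)) * (2 ^ r * (A * Real.exp (b * t / 2)) * (1 + b * q) ^ (-r)) := by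
        refine mul_le_mul_of_nonneg_left (e4.trans ?_) (Real.exp_pos _).le
        gcongr
    _ = (2 ^ r * A) * (1 + b * q) ^ (-r) * Real.exp (-((a + b) * t) + b * t / 2) := by
        rw [Real.exp_add]; ring
    _ ≤ (2 ^ r * A) * (1 + b * q) ^ (-r) * Real.exp (-((a + b) / 2 * t)) := by
        gcongr
        nlinarith [mul_nonneg ha ht.le]
    _ = _ := by ring

lemma factor_id (k A B S R U T Ep Em ex : ℝ) (hA : 0 < A) (hB : 0 < B) (hS : 0 < S) (hR : 0 < R) (hU : 0 < U)
    (hT : 0 < T) :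
    (S * B * Ep + A * R * Em) * (U * T) * ex * (A * B * S * R * U * T) ^ (k - 1) =
    ((Ep * ex) * (S ^ k * A ^ (k - 1)) * (B ^ k * R ^ (k - 1)) + (Em * ex) * (S ^ (k - 1) * A ^ k) * (B ^ (k - 1) * R ^ k))
      * (U ^ k * T ^ k) := by
  have h : ∀ x : ℝ, 0 < x → x ^ k = x * x ^ (k - 1) := by
    intro x hx
    rw [Real.rpow_sub_one hx.ne']; field_simp
  rw [Real.mul_rpow (by positivity) hT.le, Real.mul_rpow (by positivity) hU.le, Real.mul_rpow (by positivity) hR.le,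
    Real.mul_rpow (by positivity) hS.le, Real.mul_rpow (by positivity) hB.le, h A hA, h B hB, h S hS, h R hR, h U hU, h T hT]
  ring

lemma ptwise (k : ℝ) (hk : 0 < k) : ∃ C : ℝ, 0 < C ∧ ∀ p q a b s t : ℝ, 0 ≤ a → 0 ≤ b → 0 < s → s < p →
    0 < t → t < q → p ≤ q → ∀ F : ℝ,
    F = (s * (p + q - t) * Erk1 k (b / 2) (s + q - t) + (p - s) * (q - t) * Erk1 k (-b / 2) (s + q - t)) * ((s + q) * t)
      * Real.exp (-(a * s + (a + b) * t) - b / 2 * (s + q - t)) * ((p - s) * (p + q - t) * s * (q - t) * (s + q) * t) ^ (k - 1) →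
    C⁻¹ * ((1 + b * q) ^ (-(k + 1)) * q ^ (k - 1) * (s ^ (k - 1) * (p - s) ^ k * Real.exp (-(a * s)))) *
        (t ^ k * (q - t) ^ (2 * k) * Real.exp (-((a + b) * t))) ≤ F ∧
    F ≤ C * ((1 + b * q) ^ (-k) * (s ^ k * (p - s) ^ (k - 1) * Real.exp (-(a * s))) +
        (1 + b * q) ^ (-(k + 1)) * (s ^ (k - 1) * (p - s) ^ k * Real.exp (-(a * s)))) *
        (q ^ (2 * k) * (t ^ k * (q - t) ^ (k - 1) * Real.exp (-((a + b) / 2 * t)))) := by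
  obtain ⟨C0, hC0, HE⟩ := erk_bd k hk
  obtain ⟨c1, hc1, D1⟩ := decay k hk
  obtain ⟨c2, hc2, D2⟩ := decay (k + 1) (by linarith)
  set K1 := C0 * (c1 + c2) * 2 ^ (2 * k)
  refine ⟨max K1 (2 * C0), lt_max_of_lt_right (by positivity), fun p q a b s t ha hb hs hsp ht htq hpq F hF => ?_⟩
  have hA : 0 < p - s := by linarith
  have hR : 0 < q - t := by linarith
  have hB : 0 < p + q - t := by linarith
  have hU : 0 < s + q := by linarith
  have hq : 0 < q := by linarith
  have hQ : 0 < 1 + b * q := by positivity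
  have hv : 0 < s + q - t := by linarith
  rw [factor_id k _ _ _ _ _ _ _ _ _ hA hB hs hR hU ht] at hF
  set v := s + q - t with hvdef
  set Ep := Erk1 k (b / 2) v
  set Em := Erk1 k (-b / 2) v
  set ex := Real.exp (-(a * s + (a + b) * t) - b / 2 * v) with hex
  have hy : 0 ≤ b / 2 * v := by positivity
  obtain ⟨ep0, ep1⟩ := (HE (b / 2) v (b / 2 * v) hy).1 rfl
  obtain ⟨em0, em1⟩ := (HE (-b / 2) v (b / 2 * v) hy).2 (by ring)
  have hex2 : Real.exp (b / 2 * v) * ex = Real.exp (-(a * s)) * Real.exp (-((a + b) * t)) := by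
    rw [hex, ← Real.exp_add, ← Real.exp_add]; congr 1; ring
  have hexp : 0 < ex := Real.exp_pos _
  have d1 := D1 q a b s t ha hb hs ht htq
  have d2 := D2 q a b s t ha hb hs ht htq
  rw [← hvdef] at d1 d2
  have pS := Real.rpow_pos_of_pos hs k
  have pS1 := Real.rpow_pos_of_pos hs (k - 1)
  have pA := Real.rpow_pos_of_pos hA k
  have pA1 := Real.rpow_pos_of_pos hA (k - 1)
  have pB := Real.rpow_pos_of_pos hB k
  have pB1 := Real.rpow_pos_of_pos hB (k - 1)
  have pR := Real.rpow_pos_of_pos hR k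
  have pR1 := Real.rpow_pos_of_pos hR (k - 1)
  have pU := Real.rpow_pos_of_pos hU k
  have pT := Real.rpow_pos_of_pos ht k
  have emp : 0 ≤ Em := le_trans (by positivity) em0
  have sp : ∀ x : ℝ, 0 < x → x ^ (k - 1) * x = x ^ k := by
    intro x hx
    rw [Real.rpow_sub_one hx.ne']; field_simp
  rw [hF]
  constructor
  · have l1 : C0⁻¹ * (1 + b * q) ^ (-(k + 1)) * (Real.exp (-(a * s)) * Real.exp (-((a + b) * t))) ≤ Em * ex := by
      calc _ ≤ C0⁻¹ * (1 + b / 2 * v) ^ (-(k + 1)) * (Real.exp (-(a * s)) * Real.exp (-((a + b) * t))) := by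
            gcongr ?_ * ?_ * _
            refine Real.rpow_le_rpow_of_nonpos (by positivity) ?_ (by linarith)
            have : v ≤ 2 * q := by linarith
            nlinarith
        _ = C0⁻¹ * (Real.exp (b / 2 * v) * (1 + b / 2 * v) ^ (-(k + 1))) * ex := by
            rw [← hex2]; ring
        _ ≤ _ := by gcongr
    have l2 : (2 * q)⁻¹ * (q - t) ^ (2 * k) ≤ (p + q - t) ^ (k - 1) * (q - t) ^ k := by
      rw [show 2 * k = k + k by ring, Real.rpow_add hR, ← mul_assoc]
      gcongr
      rw [Real.rpow_sub_one hB.ne', inv_mul_eq_div]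
      have : (q - t) ^ k ≤ (p + q - t) ^ k := Real.rpow_le_rpow hR.le (by linarith) hk.le
      gcongr
      linarith
    have l3 : q ^ k ≤ (s + q) ^ k := Real.rpow_le_rpow hq.le (by linarith) hk.le
    calc _ ≤ (2 * C0)⁻¹ * ((1 + b * q) ^ (-(k + 1)) * q ^ (k - 1) * (s ^ (k - 1) * (p - s) ^ k * Real.exp (-(a * s)))) *
        (t ^ k * (q - t) ^ (2 * k) * Real.exp (-((a + b) * t))) := by
          gcongr
          exact le_max_right _ _
      _ = (C0⁻¹ * (1 + b * q) ^ (-(k + 1)) * (Real.exp (-(a * s)) * Real.exp (-((a + b) * t)))) * (s ^ (k - 1) * (p - s) ^ k) *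
           ((2 * q)⁻¹ * (q - t) ^ (2 * k)) * (q ^ k * t ^ k) := by
          rw [Real.rpow_sub_one hq.ne']; field_simp
      _ ≤ (Em * ex) * (s ^ (k - 1) * (p - s) ^ k) * ((p + q - t) ^ (k - 1) * (q - t) ^ k) * ((s + q) ^ k * t ^ k) := by
          gcongr
      _ ≤ _ := by
          gcongr
          exact le_add_of_nonneg_left (by positivity)
  · have u1 : Ep * ex ≤ C0 * (c1 + c2) * ((1 + b * q) ^ (-k) * Real.exp (-(a * s)) * Real.exp (-((a + b) / 2 * t))) := by
      calc _ ≤ C0 * (Real.exp (b / 2 * v) * (1 + b / 2 * v) ^ (-k)) * ex := by gcongr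
        _ = C0 * Real.exp (-(a * s)) * (Real.exp (-((a + b) * t)) * (1 + b / 2 * v) ^ (-k)) := by
            linear_combination C0 * (1 + b / 2 * v) ^ (-k) * hex2
        _ ≤ C0 * Real.exp (-(a * s)) * (c1 * ((1 + b * q) ^ (-k) * Real.exp (-((a + b) / 2 * t)))) := by gcongr
        _ ≤ C0 * Real.exp (-(a * s)) * ((c1 + c2) * ((1 + b * q) ^ (-k) * Real.exp (-((a + b) / 2 * t)))) := by
            gcongr; linarith
        _ = _ := by ring
    have u2 : Em * ex ≤ C0 * (c1 + c2) * ((1 + b * q) ^ (-(k + 1)) * Real.exp (-(a * s)) * Real.exp (-((a + b) / 2 * t))) := by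
      calc _ ≤ C0 * (Real.exp (b / 2 * v) * (1 + b / 2 * v) ^ (-(k + 1))) * ex := by gcongr
        _ = C0 * Real.exp (-(a * s)) * (Real.exp (-((a + b) * t)) * (1 + b / 2 * v) ^ (-(k + 1))) := by
            linear_combination C0 * (1 + b / 2 * v) ^ (-(k + 1)) * hex2
        _ ≤ C0 * Real.exp (-(a * s)) * (c2 * ((1 + b * q) ^ (-(k + 1)) * Real.exp (-((a + b) / 2 * t)))) := by gcongr
        _ ≤ C0 * Real.exp (-(a * s)) * ((c1 + c2) * ((1 + b * q) ^ (-(k + 1)) * Real.exp (-((a + b) / 2 * t)))) := by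
            gcongr; linarith
        _ = _ := by ring
    have u3 : (p + q - t) ^ k ≤ (2 * q) ^ k := Real.rpow_le_rpow hB.le (by linarith) hk.le
    have u4 : (s + q) ^ k ≤ (2 * q) ^ k := Real.rpow_le_rpow hU.le (by linarith) hk.le
    have u5 : (p + q - t) ^ (k - 1) * (q - t) ^ k ≤ (2 * q) ^ k * (q - t) ^ (k - 1) := by
      calc _ = ((p + q - t) ^ (k - 1) * (q - t)) * (q - t) ^ (k - 1) := by rw [← sp _ hR]; ring
        _ ≤ ((p + q - t) ^ (k - 1) * (p + q - t)) * (q - t) ^ (k - 1) := by gcongr; linarith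
        _ ≤ _ := by rw [sp _ hB]; gcongr
    have e2 : (2 * q) ^ k * (2 * q) ^ k = 2 ^ (2 * k) * q ^ (2 * k) := by
      rw [← Real.rpow_add (by positivity), ← two_mul, Real.mul_rpow (by norm_num) hq.le]
    set Z := C0 * (c1 + c2)
    have hZ : 0 < Z := by positivity
    calc _ ≤ ((Z * ((1 + b * q) ^ (-k) * Real.exp (-(a * s)) * Real.exp (-((a + b) / 2 * t)))) * (s ^ k * (p - s) ^ (k - 1)) *
              ((2 * q) ^ k * (q - t) ^ (k - 1)) +
            (Z * ((1 + b * q) ^ (-(k + 1)) * Real.exp (-(a * s)) * Real.exp (-((a + b) / 2 * t)))) * (s ^ (k - 1) * (p - s) ^ k) *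
              ((2 * q) ^ k * (q - t) ^ (k - 1))) * ((2 * q) ^ k * t ^ k) := by
          gcongr
      _ = K1 * ((1 + b * q) ^ (-k) * (s ^ k * (p - s) ^ (k - 1) * Real.exp (-(a * s))) +
        (1 + b * q) ^ (-(k + 1)) * (s ^ (k - 1) * (p - s) ^ k * Real.exp (-(a * s)))) *
        (q ^ (2 * k) * (t ^ k * (q - t) ^ (k - 1) * Real.exp (-((a + b) / 2 * t)))) := by
          simp only [K1]
          linear_combination (Z * ((1 + b * q) ^ (-k) * (s ^ k * (p - s) ^ (k - 1) * Real.exp (-(a * s))) +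
        (1 + b * q) ^ (-(k + 1)) * (s ^ (k - 1) * (p - s) ^ k * Real.exp (-(a * s)))) *
        ((t ^ k * (q - t) ^ (k - 1) * Real.exp (-((a + b) / 2 * t))))) * e2
      _ ≤ _ := by
          gcongr
          exact le_max_left _ _

lemma final_up (k p q a b : ℝ) (hk : 0 < k) (hp : 0 < p) (hpq : p ≤ q) (ha : 0 ≤ a) (hb : 0 ≤ b) (hab : q * b ≤ p * a)
    (C C1 C2 C3 : ℝ) (hC : 0 < C) (hC1 : 0 < C1) (hC2 : 0 < C2) (hC3 : 0 < C3) :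
    (C * ((1 + b * q) ^ (-k) * (C1 * (p ^ (k + 1 + k - 1) * (1 + a * p) ^ (-(k + 1)))) +
        (1 + b * q) ^ (-(k + 1)) * (C2 * (p ^ (k + (k + 1) - 1) * (1 + a * p) ^ (-k))))) *
      (q ^ (2 * k) * (C3 * (q ^ (k + 1 + k - 1) * (1 + (a + b) / 2 * q) ^ (-(k + 1))))) ≤
    C * (C1 + C2) * C3 * 4 ^ (k + 1) * ((p * (p + q) * q) ^ (2 * k) / ((1 + p * a) ^ k * (1 + q * b) ^ (k + 1) *
      (1 + (p + q) * (a + b)) ^ (k + 1))) := by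
  have hq : 0 < q := by linarith
  have e1 : k + 1 + k - 1 = 2 * k := by ring
  have e2 : k + (k + 1) - 1 = 2 * k := by ring
  rw [e1, e2, mul_comm b q, mul_comm a p, Real.mul_rpow (by positivity) hq.le, Real.mul_rpow hp.le (by positivity)]
  have P0 : 0 < 1 + p * a := by positivity
  have Q0 : 0 < 1 + q * b := by positivity
  have R0 : 0 < 1 + (a + b) / 2 * q := by positivity
  have G0 : 0 < 1 + (p + q) * (a + b) := by positivity
  have h1 : (1 + q * b) ^ (-k) * (1 + p * a) ^ (-(k + 1)) ≤ (1 + q * b) ^ (-(k + 1)) * (1 + p * a) ^ (-k) := by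
    rw [Real.rpow_neg Q0.le, Real.rpow_neg Q0.le, Real.rpow_neg P0.le, Real.rpow_neg P0.le, ← mul_inv, ← mul_inv,
      Real.rpow_add_one P0.ne', Real.rpow_add_one Q0.ne']
    gcongr ?_⁻¹
    calc _ = (1 + q * b) ^ k * (1 + p * a) ^ k * (1 + q * b) := by ring
      _ ≤ (1 + q * b) ^ k * (1 + p * a) ^ k * (1 + p * a) := by gcongr
      _ = _ := by ring
  have h2 : (1 + (a + b) / 2 * q) ^ (-(k + 1)) ≤ 4 ^ (k + 1) * (1 + (p + q) * (a + b)) ^ (-(k + 1)) := by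
    have : (4:ℝ) ^ (k + 1) = (1 / 4) ^ (-(k + 1)) := by
      rw [one_div, Real.inv_rpow (by norm_num), Real.rpow_neg (by norm_num), inv_inv]
    rw [this, ← Real.mul_rpow (by norm_num) G0.le]
    refine Real.rpow_le_rpow_of_nonpos (by positivity) ?_ (by linarith)
    nlinarith [mul_nonneg (sub_nonneg.2 hpq) (add_nonneg ha hb)]
  have h3 : q ^ (2 * k) ≤ (p + q) ^ (2 * k) := Real.rpow_le_rpow hq.le (by linarith) (by linarith)
  calc _ = C * p ^ (2 * k) * (C1 * ((1 + q * b) ^ (-k) * (1 + p * a) ^ (-(k + 1))) +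
        C2 * ((1 + q * b) ^ (-(k + 1)) * (1 + p * a) ^ (-k))) *
      (q ^ (2 * k) * C3 * q ^ (2 * k) * (1 + (a + b) / 2 * q) ^ (-(k + 1))) := by ring
    _ ≤ C * p ^ (2 * k) * (C1 * ((1 + q * b) ^ (-(k + 1)) * (1 + p * a) ^ (-k)) +
        C2 * ((1 + q * b) ^ (-(k + 1)) * (1 + p * a) ^ (-k))) *
      ((p + q) ^ (2 * k) * C3 * q ^ (2 * k) * (4 ^ (k + 1) * (1 + (p + q) * (a + b)) ^ (-(k + 1)))) := by gcongr
    _ = _ := by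
      rw [Real.rpow_neg Q0.le, Real.rpow_neg P0.le, Real.rpow_neg G0.le]
      field_simp

lemma final_lo (k p q a b : ℝ) (hk : 0 < k) (hp : 0 < p) (hpq : p ≤ q) (ha : 0 ≤ a) (hb : 0 ≤ b)
    (C C2 C4 : ℝ) (hC : 0 < C) (hC2 : 0 < C2) (hC4 : 0 < C4) :
    (C * C2 * C4 * 2 ^ (2 * k))⁻¹ * ((p * (p + q) * q) ^ (2 * k) / ((1 + p * a) ^ k * (1 + q * b) ^ (k + 1) *
      (1 + (p + q) * (a + b)) ^ (k + 1))) ≤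
    (C⁻¹ * ((1 + b * q) ^ (-(k + 1)) * q ^ (k - 1) * (C2⁻¹ * (p ^ (k + (k + 1) - 1) * (1 + a * p) ^ (-k))))) *
      (C4⁻¹ * (q ^ (k + 1 + (2 * k + 1) - 1) * (1 + (a + b) * q) ^ (-(k + 1)))) := by
  have hq : 0 < q := by linarith
  have e1 : k + 1 + (2 * k + 1) - 1 = 3 * k + 1 := by ring
  have e2 : k + (k + 1) - 1 = 2 * k := by ring
  rw [e1, e2, mul_comm b q, mul_comm a p, Real.mul_rpow (by positivity) hq.le, Real.mul_rpow hp.le (by positivity)]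
  have P0 : 0 < 1 + p * a := by positivity
  have Q0 : 0 < 1 + q * b := by positivity
  have R0 : 0 < 1 + (a + b) * q := by positivity
  have G0 : 0 < 1 + (p + q) * (a + b) := by positivity
  have h2 : (1 + (p + q) * (a + b)) ^ (-(k + 1)) ≤ (1 + (a + b) * q) ^ (-(k + 1)) := by
    refine Real.rpow_le_rpow_of_nonpos (by positivity) ?_ (by linarith)
    nlinarith [mul_nonneg hp.le (add_nonneg ha hb)]
  have h3 : (p + q) ^ (2 * k) ≤ 2 ^ (2 * k) * q ^ (2 * k) := by
    rw [← Real.mul_rpow (by norm_num) hq.le]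
    exact Real.rpow_le_rpow (by positivity) (by linarith) (by linarith)
  have h4 : q ^ (k - 1) * q ^ (3 * k + 1) = q ^ (2 * k) * q ^ (2 * k) := by
    rw [← Real.rpow_add hq, ← Real.rpow_add hq]; congr 1; ring
  calc _ = (C * C2 * C4 * 2 ^ (2 * k))⁻¹ * (p ^ (2 * k) * (p + q) ^ (2 * k) * q ^ (2 * k)) * ((1 + p * a) ^ (-k) * (1 + q * b) ^ (-(k + 1)) *
      (1 + (p + q) * (a + b)) ^ (-(k + 1))) := by
          rw [Real.rpow_neg Q0.le, Real.rpow_neg P0.le, Real.rpow_neg G0.le]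
          field_simp
    _ ≤ (C * C2 * C4 * 2 ^ (2 * k))⁻¹ * (p ^ (2 * k) * (2 ^ (2 * k) * q ^ (2 * k)) * q ^ (2 * k)) * ((1 + p * a) ^ (-k) * (1 + q * b) ^ (-(k + 1)) *
      (1 + (a + b) * q) ^ (-(k + 1))) := by gcongr
    _ = (C * C2 * C4)⁻¹ * p ^ (2 * k) * (q ^ (2 * k) * q ^ (2 * k)) * ((1 + p * a) ^ (-k) * (1 + q * b) ^ (-(k + 1)) *
      (1 + (a + b) * q) ^ (-(k + 1))) := by
        field_simp
    _ = _ := by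
        rw [← h4, mul_inv, mul_inv]; ring

/-- Theorem 4.1: sharp estimate of the `A₂` Dunkl kernel. -/
theorem estimate_C312_case2 (k : ℝ) (hk : 0 < k) :
    ∃ C : ℝ, 0 < C ∧ ∀ l1 l2 l3 x1 x2 x3 : ℝ,
      l1 + l2 + l3 = 0 →
      l2 < l1 →
      l3 < l2 →
      x1 + x2 + x3 = 0 →
      x1 ≤ x3 →
      x2 ≤ x1 →
      l1 - l2 ≤ l2 - l3 →
      (l2 - l3) * (x1 - x2) ≤ (l1 - l2) * (x3 - x1) →
      (C⁻¹ * (Real.exp (l1 * x3 + l2 * x1 + l3 * x2) /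
          ((1 + (l1 - l2) * (x3 - x1)) ^ k * (1 + (l2 - l3) * (x1 - x2)) ^ (k + 1)
            * (1 + (l1 - l3) * (x3 - x2)) ^ (k + 1)))
        ≤ EkA2 k x1 x2 x3 l1 l2 l3 ∧
      EkA2 k x1 x2 x3 l1 l2 l3
        ≤ C * (Real.exp (l1 * x3 + l2 * x1 + l3 * x2) /
          ((1 + (l1 - l2) * (x3 - x1)) ^ k * (1 + (l2 - l3) * (x1 - x2)) ^ (k + 1)
            * (1 + (l1 - l3) * (x3 - x2)) ^ (k + 1)))) := by
  obtain ⟨C, hC, HP⟩ := ptwise k hk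
  obtain ⟨C1, hC1, H1⟩ := keyL (k + 1) k (by linarith) hk
  obtain ⟨C2, hC2, H2⟩ := keyL k (k + 1) hk (by linarith)
  obtain ⟨C4, hC4, H4⟩ := keyL (k + 1) (2 * k + 1) (by linarith) (by linarith)
  simp only [add_sub_cancel_right k 1, add_sub_cancel_right (2 * k) 1] at H1 H2 H4
  set K0 := 3 * Real.Gamma (3 * k) / Real.Gamma k ^ 2 with hK0
  have hK0p : 0 < K0 := by
    have := Real.Gamma_pos_of_pos hk
    have := Real.Gamma_pos_of_pos (show 0 < 3 * k by linarith)
    positivity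
  set U := K0 * (C * (C1 + C2) * C1 * 4 ^ (k + 1)) with hU
  set L := K0 * (C * C2 * C4 * 2 ^ (2 * k))⁻¹ with hL
  have hLp : 0 < L := by positivity
  refine ⟨max U L⁻¹, lt_max_of_lt_right (by positivity), ?_⟩
  intro l1 l2 l3 x1 x2 x3 hl h12 h23 hx h31 h1x hpq hab
  obtain ⟨p, hp⟩ : ∃ p, p = l1 - l2 := ⟨_, rfl⟩
  obtain ⟨q, hq⟩ : ∃ q, q = l2 - l3 := ⟨_, rfl⟩
  obtain ⟨a, ha⟩ : ∃ a, a = x3 - x1 := ⟨_, rfl⟩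
  obtain ⟨b, hb⟩ : ∃ b, b = x1 - x2 := ⟨_, rfl⟩
  have hp0 : 0 < p := by linarith
  have hq0 : 0 < q := by linarith
  have ha0 : 0 ≤ a := by linarith
  have hb0 : 0 ≤ b := by linarith
  set M := Real.exp (l1 * x3 + l2 * x1 + l3 * x2) with hM
  have hMp : 0 < M := Real.exp_pos _
  have eE : EkA2 k x1 x2 x3 l1 l2 l3 = K0 * M / (p * (p + q) * q) ^ (2 * k) *
    ∫ n2 in l3..l2, ∫ n1 in l2..l1, (((n1 - l2) * (p + q - (n2 - l3)) * Erk1 k (b / 2) ((n1 - l2) + q - (n2 - l3)) + (p - (n1 - l2)) * (q - (n2 - l3)) * Erk1 k (-b / 2) ((n1 - l2) + q - (n2 - l3))) * (((n1 - l2) + q) * (n2 - l3))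
      * Real.exp (-(a * (n1 - l2) + (a + b) * (n2 - l3)) - b / 2 * ((n1 - l2) + q - (n2 - l3))) * ((p - (n1 - l2)) * (p + q - (n2 - l3)) * (n1 - l2) * (q - (n2 - l3)) * ((n1 - l2) + q) * (n2 - l3)) ^ (k - 1)) := by
    have hint : ∀ n1 n2 : ℝ, ((n1 - l2) * (l1 - n2) * Erk1 k ((x1 - x2) / 2) (n1 - n2)
        + (l1 - n1) * (l2 - n2) * Erk1 k (-(x1 - x2) / 2) (n1 - n2))
      * ((n1 - l3) * (n2 - l3)) * Real.exp ((x1 + x2 - 2 * x3) * (n1 + n2) / 2)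
      * Wk k l1 l2 l3 n1 n2 = M * (((n1 - l2) * (p + q - (n2 - l3)) * Erk1 k (b / 2) ((n1 - l2) + q - (n2 - l3)) + (p - (n1 - l2)) * (q - (n2 - l3)) * Erk1 k (-b / 2) ((n1 - l2) + q - (n2 - l3))) * (((n1 - l2) + q) * (n2 - l3))
      * Real.exp (-(a * (n1 - l2) + (a + b) * (n2 - l3)) - b / 2 * ((n1 - l2) + q - (n2 - l3))) * ((p - (n1 - l2)) * (p + q - (n2 - l3)) * (n1 - l2) * (q - (n2 - l3)) * ((n1 - l2) + q) * (n2 - l3)) ^ (k - 1)) := by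
      intro n1 n2
      have e0 : Real.exp ((x1 + x2 - 2 * x3) * (n1 + n2) / 2) = M * Real.exp (-(a * (n1 - l2) + (a + b) * (n2 - l3)) - b / 2 * ((n1 - l2) + q - (n2 - l3))) := by
        rw [hM, ← Real.exp_add]
        congr 1
        rw [ha, hb, hq]
        have : l1 = -l2 - l3 := by linarith
        rw [this]
        ring
      rw [e0]
      unfold Wk
      rw [← hb, show p + q - (n2 - l3) = l1 - n2 by rw [hp, hq]; ring, show n1 - l2 + q - (n2 - l3) = n1 - n2 by rw [hq]; ring,
        show p - (n1 - l2) = l1 - n1 by rw [hp]; ring, show q - (n2 - l3) = l2 - n2 by rw [hq]; ring,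
        show n1 - l2 + q = n1 - l3 by rw [hq]; ring]
      ring
    unfold EkA2
    simp_rw [hint, intervalIntegral.integral_const_mul]
    have : Vlam l1 l2 l3 = p * (p + q) * q := by unfold Vlam; rw [hp, hq]; ring
    rw [this, hK0]
    ring
  obtain ⟨i1, _, u1⟩ := H1 l2 l1 a h12 ha0
  obtain ⟨i2, lo2, u2⟩ := H2 l2 l1 a h12 ha0
  obtain ⟨i3, _, u3⟩ := H1 l3 l2 ((a + b) / 2) h23 (by positivity)
  obtain ⟨i4, lo4, _⟩ := H4 l3 l2 (a + b) h23 (by positivity)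
  have S := sandwich (fun n2 n1 => ((n1 - l2) * (p + q - (n2 - l3)) * Erk1 k (b / 2) ((n1 - l2) + q - (n2 - l3)) + (p - (n1 - l2)) * (q - (n2 - l3)) * Erk1 k (-b / 2) ((n1 - l2) + q - (n2 - l3))) * (((n1 - l2) + q) * (n2 - l3))
      * Real.exp (-(a * (n1 - l2) + (a + b) * (n2 - l3)) - b / 2 * ((n1 - l2) + q - (n2 - l3))) * ((p - (n1 - l2)) * (p + q - (n2 - l3)) * (n1 - l2) * (q - (n2 - l3)) * ((n1 - l2) + q) * (n2 - l3)) ^ (k - 1))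
    (by
      have m1 : Measurable (fun z : ℝ × ℝ => Erk1 k (b / 2) ((z.2 - l2) + q - (z.1 - l3))) :=
        (erk_meas k (b / 2)).comp (by fun_prop)
      have m2 : Measurable (fun z : ℝ × ℝ => Erk1 k (-b / 2) ((z.2 - l2) + q - (z.1 - l3))) :=
        (erk_meas k (-b / 2)).comp (by fun_prop)
      unfold Function.uncurry
      fun_prop) l3 l2 l2 l1 h23.le h12.le
    _ _ _ _ ((i2.const_mul ((1 + b * q) ^ (-(k + 1)) * q ^ (k - 1))).const_mul C⁻¹)
      (((i1.const_mul ((1 + b * q) ^ (-k))).add (i2.const_mul ((1 + b * q) ^ (-(k + 1))))).const_mul C)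
      i4 (i3.const_mul (q ^ (2 * k)))
    (by
      intro t ht s hs
      obtain ⟨r1, r2⟩ := HP p q a b (s - l2) (t - l3) ha0 hb0 (by linarith [hs.1]) (by linarith [hs.2]) (by linarith [ht.1])
        (by linarith [ht.2]) (by linarith) _ rfl
      rw [show p - (s - l2) = l1 - s by rw [hp]; ring, show q - (t - l3) = l2 - t by rw [hq]; ring] at *
      refine ⟨?_, r1, r2⟩
      have q1 : 0 < s - l2 := by linarith [hs.1]
      have q2 : 0 < l1 - s := by linarith [hs.2]
      have q3 : 0 < t - l3 := by linarith [ht.1]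
      have q4 : 0 < l2 - t := by linarith [ht.2]
      positivity)
  obtain ⟨S1, S2⟩ := S
  rw [intervalIntegral.integral_const_mul, intervalIntegral.integral_const_mul] at S1
  rw [intervalIntegral.integral_const_mul, intervalIntegral.integral_const_mul,
    intervalIntegral.integral_add (i1.const_mul _) (i2.const_mul _),
    intervalIntegral.integral_const_mul, intervalIntegral.integral_const_mul] at S2
  rw [← hp] at u1 u2 lo2
  rw [← hq] at u3 lo4
  rw [← hp, ← hq, ← ha, ← hb, show l1 - l3 = p + q by rw [hp, hq]; ring, show x3 - x2 = a + b by rw [ha, hb]; ring]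
  rw [← hp, ← hq, ← ha, ← hb] at hab
  have hpq' : p ≤ q := by linarith
  have FU := final_up k p q a b hk hp0 hpq' ha0 hb0 hab C C1 C2 C1 hC hC1 hC2 hC1
  have FL := final_lo k p q a b hk hp0 hpq' ha0 hb0 C C2 C4 hC hC2 hC4
  have hV : 0 < (p * (p + q) * q) ^ (2 * k) := by positivity
  rw [eE]
  set J := ∫ n2 in l3..l2, ∫ n1 in l2..l1, (((n1 - l2) * (p + q - (n2 - l3)) * Erk1 k (b / 2) ((n1 - l2) + q - (n2 - l3)) + (p - (n1 - l2)) * (q - (n2 - l3)) * Erk1 k (-b / 2) ((n1 - l2) + q - (n2 - l3))) * (((n1 - l2) + q) * (n2 - l3))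
      * Real.exp (-(a * (n1 - l2) + (a + b) * (n2 - l3)) - b / 2 * ((n1 - l2) + q - (n2 - l3))) * ((p - (n1 - l2)) * (p + q - (n2 - l3)) * (n1 - l2) * (q - (n2 - l3)) * ((n1 - l2) + q) * (n2 - l3)) ^ (k - 1))
  set D := (1 + p * a) ^ k * (1 + q * b) ^ (k + 1) * (1 + (p + q) * (a + b)) ^ (k + 1) with hD
  have hDp : 0 < D := by positivity
  have nn3 : 0 ≤ ∫ t in l3..l2, (t - l3) ^ k * (l2 - t) ^ (k - 1) * Real.exp (-((a + b) / 2 * (t - l3))) := by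
    refine le_trans ?_ (H1 l3 l2 ((a + b) / 2) h23 (by positivity)).2.1
    have : 0 < l2 - l3 := by linarith
    positivity
  have nn2 : 0 ≤ ∫ t in l2..l1, (t - l2) ^ (k - 1) * (l1 - t) ^ k * Real.exp (-(a * (t - l2))) :=
    le_trans (by positivity) lo2
  constructor
  · have s1 := FL.trans (le_trans (by gcongr) S1)
    calc _ ≤ L * (M / D) := by
          gcongr
          exact inv_le_of_inv_le₀ hLp (le_max_right _ _)
      _ = K0 * M / (p * (p + q) * q) ^ (2 * k) * ((C * C2 * C4 * 2 ^ (2 * k))⁻¹ * ((p * (p + q) * q) ^ (2 * k) / D)) := by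
          rw [hL]; field_simp
      _ ≤ _ := by gcongr
  · have s2 := S2.trans (le_trans (by gcongr) FU)
    calc _ ≤ K0 * M / (p * (p + q) * q) ^ (2 * k) * (C * (C1 + C2) * C1 * 4 ^ (k + 1) * ((p * (p + q) * q) ^ (2 * k) / D)) := by gcongr
      _ = U * (M / D) := by
          rw [hU]; field_simp
      _ ≤ _ := by
          gcongr
          exact le_max_left _ _
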